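/- Let Π be an equivalence-preserving transformation and let F, F' be CNF formulas with F →_Π F'. Then Aut_sem(F)↓_{Lit(F')} ⊆ Aut_sem(F') and Aut_sem(F')↑^{Lit(F)} ⊆ Aut_sem(F); in particular, every equivalence-preserving transformation is weakly symmetry-preserving and symmetry-lifting. -/

import Mathlib

/-- A literal over a variable type `V`: a variable or its negation. -/
inductive Lit (V : Type) where
  | pos : V → Lit V
  | neg : V → Lit V
deriving DecidableEq

variable {V : Type} [DecidableEq V]

/-- Negation of a literal (so that double negation is the identity). -/
def Lit.negate : Lit V → Lit V
  | .pos v => .neg v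
  | .neg v => .pos v

/-- The underlying variable of a literal. -/
def Lit.var : Lit V → V
  | .pos v => v
  | .neg v => v

/-- A clause is a finite set of literals. -/
abbrev Clause (V : Type) := Finset (Lit V)

/-- A CNF formula is a finite set of clauses. -/
abbrev CNF (V : Type) := Finset (Clause V)

/-- `Var(F)`: the variables occurring in a formula. -/
def CNF.vars (F : CNF V) : Finset V := Finset.sup F (fun C => Finset.image Lit.var C)

/-- `Lit(F) = Var(F) ∪ {v̄ : v ∈ Var(F)}`. -/
def CNF.lits (F : CNF V) : Finset (Lit V) :=
  Finset.image Lit.pos (CNF.vars F) ∪ Finset.image Lit.neg (CNF.vars F)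

/-- The value of a literal under a complete assignment (given on the variables,
which determines a consistent complete assignment on all literals). -/
def Lit.val (σ : V → Bool) : Lit V → Bool
  | .pos v => σ v
  | .neg v => !(σ v)

/-- `C[σ]`: delete from `C` every literal mapped to `⊥` by `σ`
(i.e. keep `l` with `¬l ∉ σ`). -/
def Clause.reduce (σ : V → Bool) (C : Clause V) : Clause V :=
  Finset.filter (fun l => Lit.val σ (Lit.negate l) = false) C

/-- `F[σ]`: delete every clause containing a literal mapped to `⊤` by `σ`
(for a complete assignment: every clause containing no false literal is kept)
and delete from each remaining clause every literal mapped to `⊥`. -/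
def CNF.reduce (F : CNF V) (σ : V → Bool) : CNF V :=
  Finset.image (Clause.reduce σ) (Finset.filter (fun C => ∀ l ∈ C, Lit.val σ l = false) F)

/-- Apply a map on literals elementwise to clauses and formulas. -/
def CNF.map (φ : Lit V → Lit V) (F : CNF V) : CNF V :=
  Finset.image (fun C => Finset.image φ C) F

/-- `φ` is a syntactic symmetry of `F`: a bijection of `Lit(F)` respecting
negation with `φ(F) = F`. -/
def IsSynSym (F : CNF V) (φ : Lit V → Lit V) : Prop :=
  Set.BijOn φ (CNF.lits F : Set (Lit V)) (CNF.lits F : Set (Lit V)) ∧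
  (∀ l ∈ CNF.lits F, φ (Lit.negate l) = Lit.negate (φ l)) ∧
  CNF.map φ F = F

/-- `φ` is a semantic symmetry of `F`: a bijection of `Lit(F)` respecting
negation with `F[σ] = φ(F)[σ]` for every complete assignment `σ`. -/
def IsSemSym (F : CNF V) (φ : Lit V → Lit V) : Prop :=
  Set.BijOn φ (CNF.lits F : Set (Lit V)) (CNF.lits F : Set (Lit V)) ∧
  (∀ l ∈ CNF.lits F, φ (Lit.negate l) = Lit.negate (φ l)) ∧
  ∀ σ : V → Bool, CNF.reduce F σ = CNF.reduce (CNF.map φ F) σ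

/-- Extend a map defined on the literal set `S` by the identity outside `S`. -/
def extendId (S : Finset (Lit V)) (φ : Lit V → Lit V) : Lit V → Lit V :=
  fun l => if l ∈ S then φ l else l

/-- `F[l ↦ ⊤]`: delete every clause containing `l` and delete `l̄` from every
remaining clause. -/
def CNF.assignTrue (F : CNF V) (l : Lit V) : CNF V :=
  Finset.image (fun C => Finset.erase C (Lit.negate l)) (Finset.filter (fun C => l ∉ C) F)

def CNF.Fals (F : CNF V) (σ : V → Bool) : Prop := ∃ C ∈ F, ∀ l ∈ C, Lit.val σ l = false

theorem Lit.val_negate (σ : V → Bool) (l : Lit V) : Lit.val σ (Lit.negate l) = !(Lit.val σ l) := by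
  cases l <;> simp [Lit.val, Lit.negate]

theorem Lit.negate_negate (l : Lit V) : l.negate.negate = l := by
  cases l <;> rfl

theorem CNF.mem_reduce (F : CNF V) (σ : V → Bool) (D : Clause V) :
    D ∈ CNF.reduce F σ ↔ D = ∅ ∧ F.Fals σ := by
  have key : ∀ C : Clause V, (∀ l ∈ C, Lit.val σ l = false) → Clause.reduce σ C = ∅ := by
    intro C hC
    unfold Clause.reduce
    rw [Finset.filter_eq_empty_iff]
    intro l hl
    rw [Lit.val_negate, hC l hl]
    simp
  unfold CNF.reduce CNF.Fals
  rw [Finset.mem_image]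
  constructor
  · rintro ⟨C, hC, rfl⟩
    rw [Finset.mem_filter] at hC
    exact ⟨key C hC.2, C, hC⟩
  · rintro ⟨rfl, C, hC⟩
    exact ⟨C, Finset.mem_filter.2 hC, key C hC.2⟩

theorem CNF.reduce_eq_iff (F G : CNF V) (σ : V → Bool) :
    CNF.reduce F σ = CNF.reduce G σ ↔ (F.Fals σ ↔ G.Fals σ) := by
  constructor
  · intro h
    have := CNF.mem_reduce F σ ∅
    rw [h, CNF.mem_reduce] at this
    simpa using this.symm
  · intro h
    ext1 D
    rw [CNF.mem_reduce, CNF.mem_reduce, h]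

theorem CNF.mem_lits (F : CNF V) (l : Lit V) : l ∈ CNF.lits F ↔ l.var ∈ CNF.vars F := by
  cases l <;> simp [CNF.lits, Lit.var]

theorem CNF.negate_mem_lits (F : CNF V) (l : Lit V) : l.negate ∈ CNF.lits F ↔ l ∈ CNF.lits F := by
  rw [CNF.mem_lits, CNF.mem_lits]
  cases l <;> rfl

theorem CNF.mem_lits_of_mem {F : CNF V} {C : Clause V} (hC : C ∈ F) {l : Lit V} (hl : l ∈ C) :
    l ∈ CNF.lits F := by
  rw [CNF.mem_lits, CNF.vars, Finset.mem_sup]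
  exact ⟨C, hC, Finset.mem_image_of_mem _ hl⟩

theorem CNF.fals_map' (F : CNF V) (φ : Lit V → Lit V) (σ : V → Bool) :
    (CNF.map φ F).Fals σ ↔ ∃ C ∈ F, ∀ l ∈ C, Lit.val σ (φ l) = false := by
  simp [CNF.Fals, CNF.map]

theorem CNF.fals_map (F : CNF V) (φ : Lit V → Lit V)
    (hn : ∀ l ∈ CNF.lits F, φ (Lit.negate l) = Lit.negate (φ l)) (σ : V → Bool) :
    (CNF.map φ F).Fals σ ↔ F.Fals (fun v => Lit.val σ (φ (.pos v))) := by
  rw [CNF.fals_map']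
  refine exists_congr fun C => and_congr_right fun hC => forall₂_congr fun l hl => ?_
  have hl' := CNF.mem_lits_of_mem hC hl
  cases l with
  | pos v => rfl
  | neg v =>
    have := hn (.pos v) ((CNF.negate_mem_lits F (.neg v)).2 hl')
    change φ (.neg v) = _ at this
    rw [this, Lit.val_negate]
    rfl

/-- If `T` is an equivalence-preserving transformation and
`F →_T F'`, then `Aut_sem(F)↓_{Lit(F')} ⊆ Aut_sem(F')` (so `T` is weakly
symmetry-preserving) and `Aut_sem(F')↑^{Lit(F)} ⊆ Aut_sem(F)` (so `T` is
symmetry-lifting). -/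
theorem equivalencePreserving_wsp_and_lifting
    (T : CNF V → Set (CNF V))
    (hvars : ∀ F F' : CNF V, F' ∈ T F → CNF.vars F' ⊆ CNF.vars F)
    (hfin : ∀ F : CNF V, (T F).Finite)
    (heq : ∀ F F' : CNF V, F' ∈ T F →
      ∀ σ : V → Bool, CNF.reduce F σ = CNF.reduce F' σ)
    (F F' : CNF V) (h : F' ∈ T F) :
    (∀ φ : Lit V → Lit V, IsSemSym F φ →
        φ '' (CNF.lits F' : Set (Lit V)) = (CNF.lits F' : Set (Lit V)) →
        IsSemSym F' φ) ∧
    (∀ φ : Lit V → Lit V, IsSemSym F' φ →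
        IsSemSym F (extendId (CNF.lits F') φ)) := by
  have hF : ∀ σ, F.Fals σ ↔ F'.Fals σ := fun σ => (CNF.reduce_eq_iff F F' σ).1 (heq F F' h σ)
  have hsub : ∀ l, l ∈ CNF.lits F' → l ∈ CNF.lits F := by
    intro l hl
    rw [CNF.mem_lits] at hl ⊢
    exact hvars F F' h hl
  constructor
  · rintro φ ⟨hb, hn, hs⟩ him
    have hn' : ∀ l ∈ CNF.lits F', φ (Lit.negate l) = Lit.negate (φ l) :=
      fun l hl => hn l (hsub l hl)
    refine ⟨?_, hn', fun σ => ?_⟩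
    · have := (hb.injOn.mono (s₁ := (CNF.lits F' : Set (Lit V))) hsub).bijOn_image
      rwa [him] at this
    · rw [CNF.reduce_eq_iff, ← hF, (CNF.reduce_eq_iff _ _ _).1 (hs σ), CNF.fals_map F φ hn,
        CNF.fals_map F' φ hn', hF]
  · rintro φ ⟨hb, hn, hs⟩
    have e1 : ∀ l ∈ CNF.lits F', extendId (CNF.lits F') φ l = φ l := fun l hl => if_pos hl
    have e2 : ∀ l, l ∉ CNF.lits F' → extendId (CNF.lits F') φ l = l := fun l hl => if_neg hl
    have hm : ∀ l ∈ CNF.lits F', φ l ∈ CNF.lits F' := fun l hl => hb.mapsTo hl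
    have hneg : ∀ l, extendId (CNF.lits F') φ (Lit.negate l)
        = Lit.negate (extendId (CNF.lits F') φ l) := by
      intro l
      by_cases hl : l ∈ CNF.lits F'
      · rw [e1 l hl, e1 _ ((CNF.negate_mem_lits F' l).2 hl), hn l hl]
      · rw [e2 l hl, e2 _ (fun hh => hl ((CNF.negate_mem_lits F' l).1 hh))]
    refine ⟨⟨?_, ?_, ?_⟩, fun l _ => hneg l, fun σ => ?_⟩
    · intro l hl
      by_cases hl' : l ∈ CNF.lits F'
      · rw [e1 l hl']; exact hsub _ (hm l hl')
      · rw [e2 l hl']; exact hl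
    · intro a _ b _ hab
      by_cases ha : a ∈ CNF.lits F' <;> by_cases hb' : b ∈ CNF.lits F'
      · rw [e1 a ha, e1 b hb'] at hab
        exact hb.injOn ha hb' hab
      · rw [e1 a ha, e2 b hb'] at hab
        exact absurd (hab ▸ hm a ha) hb'
      · rw [e2 a ha, e1 b hb'] at hab
        exact absurd (hab ▸ hm b hb') ha
      · rwa [e2 a ha, e2 b hb'] at hab
    · intro l hl
      by_cases hl' : l ∈ CNF.lits F'
      · obtain ⟨m, hm1, hm2⟩ := hb.surjOn hl'
        exact ⟨m, hsub m hm1, by rw [e1 m hm1, hm2]⟩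
      · exact ⟨l, hl, e2 l hl'⟩
    · rw [CNF.reduce_eq_iff, CNF.fals_map F _ (fun l _ => hneg l), hF, hF,
        ← CNF.fals_map F' _ (fun l _ => hneg l), (CNF.reduce_eq_iff _ _ _).1 (hs σ),
        CNF.fals_map', CNF.fals_map']
      refine exists_congr fun C => and_congr_right fun hC => forall₂_congr fun l hl => ?_
      rw [e1 l (CNF.mem_lits_of_mem hC hl)]
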